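/- arXiv:2308.10394 — 2 statements merged into one kernel-verified Lean document; each statement's English description precedes it below -/
import Mathlib

section
/- Let G be a subgroup of S_n with block partition 𝓑 and orbit cut {B_1}. If G is transitive on T = {1,…,n}, then, with N := {σ ∈ G : σ[B] = B for every B ∈ 𝓑}, the cardinality of U_{G⋌𝓑} is at most |G| · (1 + (|G↺B_1|/|N|)·(n + 3)). -/
/-! Let `B` be the block in the orbit cut, `m = |G·B|` the number of blocks and `k = |G↺B|`.
The stabilizers of `B` pointwise and setwise form a chain in `G` with successive indices `k` and
`m`, so `|G|_B| = m k`, and the same count holds for every translate of `B`. Since the translates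
partition `T`, exactly `|U| = 3 n + |G| + n m k`. Now `n ≤ m k`, because `G↺B` is transitive on `B`,
and `m |N| ≤ |G|`, because `N` lies in the setwise stabilizer of `B`. Hence
`|U| ≤ |G| + m k (n + 3) ≤ |G| + (|G| / |N|) k (n + 3)`. -/

/-- The set of restrictions `θ|_B` (as functions `B → Fin n`) of elements `θ ∈ G`
to blocks `B ∈ 𝓑`, i.e. `⋃_{B ∈ 𝓑} G|_B`. -/
def Restr (n : ℕ) (G : Subgroup (Equiv.Perm (Fin n))) (𝓑 : Set (Set (Fin n))) :
    Set ((B : Set (Fin n)) × (B → Fin n)) :=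
  { p | p.1 ∈ 𝓑 ∧ ∃ θ ∈ G, p.2 = fun x => θ x.1 }

/-- The underlying set of the ordered set `U_{G⋌𝓑}`:
the fence `F = {ℓ_1,u_1,…,ℓ_n,u_n}` (constructors `low`, `up`), the copy of `G`
(constructor `grp`), the sets `D^μ = dom(μ) × {μ}` (constructor `cell`), and the
copy of `T = {1,…,n}` (constructor `pt`). -/
inductive UPt (n : ℕ) (G : Subgroup (Equiv.Perm (Fin n))) (𝓑 : Set (Set (Fin n))) where
  | low : Fin n → UPt n G 𝓑
  | up : Fin n → UPt n G 𝓑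
  | grp : G → UPt n G 𝓑
  | cell : (μ : Restr n G 𝓑) → (j : μ.1.1) → UPt n G 𝓑
  | pt : Fin n → UPt n G 𝓑

/-- The generating strict comparabilities of `U_{G⋌𝓑}`:
`ℓ_i < u_i`, `ℓ_{i+1} < u_i`, `u_j < (j,μ)`, `(j,μ) < μ(j)`, and `θ < (j, θ|_B)`. -/
inductive UStep (n : ℕ) (G : Subgroup (Equiv.Perm (Fin n))) (𝓑 : Set (Set (Fin n))) :
    UPt n G 𝓑 → UPt n G 𝓑 → Prop where
  | fence_eq (i : Fin n) : UStep n G 𝓑 (.low i) (.up i)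
  | fence_succ (i j : Fin n) (h : (j : ℕ) = (i : ℕ) + 1) : UStep n G 𝓑 (.low j) (.up i)
  | up_cell (μ : Restr n G 𝓑) (j : μ.1.1) : UStep n G 𝓑 (.up j.1) (.cell μ j)
  | cell_pt (μ : Restr n G 𝓑) (j : μ.1.1) : UStep n G 𝓑 (.cell μ j) (.pt (μ.1.2 j))
  | grp_cell (θ : G) (μ : Restr n G 𝓑) (j : μ.1.1)
      (h : ∀ x : μ.1.1, μ.1.2 x = (θ : Equiv.Perm (Fin n)) x.1) :
      UStep n G 𝓑 (.grp θ) (.cell μ j)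

/-- Rank function used to prove antisymmetry of the generated order. -/
def UPt.rank {n : ℕ} {G : Subgroup (Equiv.Perm (Fin n))} {𝓑 : Set (Set (Fin n))} :
    UPt n G 𝓑 → ℕ
  | .low _ => 0
  | .grp _ => 0
  | .up _ => 1
  | .cell _ _ => 2
  | .pt _ => 3

theorem UStep.rank_lt {n : ℕ} {G : Subgroup (Equiv.Perm (Fin n))} {𝓑 : Set (Set (Fin n))}
    {x y : UPt n G 𝓑} (h : UStep n G 𝓑 x y) : x.rank < y.rank := by
  cases h <;> simp [UPt.rank]

/-- The order of `U_{G⋌𝓑}`: the reflexive-transitive closure of the generating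
comparabilities. -/
instance UPt.instPartialOrder (n : ℕ) (G : Subgroup (Equiv.Perm (Fin n)))
    (𝓑 : Set (Set (Fin n))) : PartialOrder (UPt n G 𝓑) where
  le := Relation.ReflTransGen (UStep n G 𝓑)
  le_refl _ := Relation.ReflTransGen.refl
  le_trans _ _ _ := Relation.ReflTransGen.trans
  le_antisymm a b hab hba := by
    have mono : ∀ {x y : UPt n G 𝓑}, Relation.ReflTransGen (UStep n G 𝓑) x y →
        x.rank ≤ y.rank := by
      intro x y h
      induction h with
      | refl => exact le_rfl
      | tail _ h2 ih => exact ih.trans h2.rank_lt.le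
    rcases hab.cases_head with h | ⟨c, hc, hcb⟩
    · exact h
    rcases hba.cases_head with h | ⟨d, hd, hda⟩
    · exact h.symm
    have h1 := hc.rank_lt
    have h2 := mono hcb
    have h3 := hd.rank_lt
    have h4 := mono hda
    omega

/-- `B` is a block for `G`: for every `σ ∈ G`, `σ[B] ∩ B ≠ ∅` implies `σ[B] = B`. -/
def IsBlockOf (n : ℕ) (G : Subgroup (Equiv.Perm (Fin n))) (B : Set (Fin n)) : Prop :=
  ∀ σ ∈ G, ((σ : Equiv.Perm (Fin n)) '' B ∩ B).Nonempty → (σ : Equiv.Perm (Fin n)) '' B = B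

/-- A block partition `𝓑 = ⋃_{j=1}^ℓ G·B_j` for `G` with orbit cut `{B_1,…,B_ℓ}`
(the `B_j` are the `cut j`): the `B_j` are nonempty blocks, the family of all images
`σ[B_i]` (`σ ∈ G`) partitions `{1,…,n}`, and distinct members of the orbit cut lie in
distinct `G`-orbits of blocks. -/
structure BlockPartition (n : ℕ) (G : Subgroup (Equiv.Perm (Fin n))) where
  ℓ : ℕ
  cut : Fin ℓ → Set (Fin n)
  nonempty_cut : ∀ i, (cut i).Nonempty
  isBlock_cut : ∀ i, IsBlockOf n G (cut i)
  partitions : ∀ x : Fin n,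
    ∃! C : Set (Fin n), (∃ i, ∃ σ ∈ G, (σ : Equiv.Perm (Fin n)) '' cut i = C) ∧ x ∈ C
  cut_distinct_orbits : ∀ i j : Fin ℓ, ∀ σ ∈ G,
    (σ : Equiv.Perm (Fin n)) '' cut i = cut j → i = j

/-- The block partition `𝓑 = ⋃_{j=1}^ℓ G·B_j` as a set of subsets of `{1,…,n}`. -/
def BlockPartition.blocks {n : ℕ} {G : Subgroup (Equiv.Perm (Fin n))}
    (P : BlockPartition n G) : Set (Set (Fin n)) :=
  { C | ∃ i, ∃ σ ∈ G, (σ : Equiv.Perm (Fin n)) '' P.cut i = C }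

/-- Composition `σ ∘ μ` of a restriction `μ = θ|_B` with `σ ∈ G`; this is the
restriction `(σθ)|_B`. -/
def Restr.comp {n : ℕ} {G : Subgroup (Equiv.Perm (Fin n))} {𝓑 : Set (Set (Fin n))}
    (σ : G) (μ : Restr n G 𝓑) : Restr n G 𝓑 :=
  ⟨⟨μ.1.1, fun x => (σ : Equiv.Perm (Fin n)) (μ.1.2 x)⟩, by
    obtain ⟨hB, θ, hθ, hf⟩ := μ.2
    refine ⟨hB, (σ : Equiv.Perm (Fin n)) * θ, mul_mem σ.2 hθ, ?_⟩
    funext x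
    simp [hf]⟩

open MulAction
open scoped Pointwise

section GroupAction

variable {G α : Type*} [Group G] [MulAction G α]

variable (G) in
/-- The set `G|_B` of restrictions to `B` of the elements of `G`, realised as the orbit of the
inclusion `B → α`, so that orbit-stabilizer arguments count it. -/
def restrictions (B : Set α) : Set (B → α) :=
  orbit G ((↑) : B → α)

variable (G) in
/-- The set `G↺B` of restrictions to `B` of those elements of `G` that map `B` onto itself; its
members are kept as maps `B → α`, as in `restrictions`. -/
def selfRestrictions (B : Set α) : Set (B → α) :=
  orbit (stabilizer G B) ((↑) : B → α)

theorem stabilizer_subtype_val (B : Set α) :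
    stabilizer G ((↑) : B → α) = fixingSubgroup G B := by
  ext g
  simp only [mem_stabilizer_iff, mem_fixingSubgroup_iff, funext_iff, Pi.smul_apply, Subtype.forall]

theorem index_fixingSubgroup (B : Set α) :
    (fixingSubgroup G B).index = (restrictions G B).ncard := by
  rw [← stabilizer_subtype_val, index_stabilizer, restrictions]

theorem relIndex_fixingSubgroup_stabilizer (B : Set α) :
    (fixingSubgroup G B).relIndex (stabilizer G B) = (selfRestrictions G B).ncard := by
  have stabilizer_eq : stabilizer (stabilizer G B) ((↑) : B → α) =
      (fixingSubgroup G B).subgroupOf (stabilizer G B) := by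
    rw [← stabilizer_subtype_val]
    rfl
  rw [selfRestrictions, ← index_stabilizer, stabilizer_eq, Subgroup.relIndex]

theorem ncard_restrictions (B : Set α) :
    (restrictions G B).ncard = (orbit G B).ncard * (selfRestrictions G B).ncard := by
  rw [← index_fixingSubgroup, ← index_stabilizer, ← relIndex_fixingSubgroup_stabilizer, mul_comm,
    Subgroup.relIndex_mul_index (fixingSubgroup_le_stabilizer G B)]

theorem ncard_restrictions_smul (g : G) (B : Set α) :
    (restrictions G (g • B)).ncard = (restrictions G B).ncard := by
  rw [← index_fixingSubgroup, ← index_fixingSubgroup,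
    SubMulAction.fixingSubgroup_smul_eq_fixingSubgroup_map_conj]
  exact Subgroup.index_map_equiv _ (MulAut.conj g)

theorem ncard_block_le_ncard_selfRestrictions [Finite α] [IsPretransitive G α] {B : Set α}
    (hB : IsBlock G B) : B.ncard ≤ (selfRestrictions G B).ncard := by
  obtain rfl | ⟨b, hb⟩ := B.eq_empty_or_nonempty
  · simp only [Set.ncard_empty, zero_le]
  have eval_image : (fun f : B → α => f ⟨b, hb⟩) '' selfRestrictions G B = B := by
    rw [selfRestrictions, orbit, ← Set.range_comp]
    exact hB.orbit_stabilizer_eq hb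
  calc B.ncard = ((fun f : B → α => f ⟨b, hb⟩) '' selfRestrictions G B).ncard := by
        rw [eval_image]
    _ ≤ (selfRestrictions G B).ncard := Set.ncard_image_le

theorem card_le_ncard_orbit_mul_ncard_selfRestrictions [Finite α] [IsPretransitive G α]
    {B : Set α} (hB : IsBlock G B) (hne : B.Nonempty) :
    Nat.card α ≤ (orbit G B).ncard * (selfRestrictions G B).ncard := by
  rw [← hB.ncard_block_mul_ncard_orbit_eq hne, mul_comm]
  exact Nat.mul_le_mul_left _ (ncard_block_le_ncard_selfRestrictions hB)

theorem ncard_orbit_mul_card_fixingSubgroup_orbit_le [Finite G] (a : α) :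
    (orbit G a).ncard * Nat.card (fixingSubgroup G (orbit G a)) ≤ Nat.card G := by
  have fixing_le : fixingSubgroup G (orbit G a) ≤ stabilizer G a :=
    fun _ hg => (mem_fixingSubgroup_iff G).1 hg a (mem_orbit_self a)
  rw [← index_stabilizer, mul_comm, ← (stabilizer G a).card_mul_index]
  exact Nat.mul_le_mul_right _ (Subgroup.card_le_of_le fixing_le)

theorem ncard_orbit_le_card_div_card_fixingSubgroup_orbit [Finite G] (a : α) :
    ((orbit G a).ncard : ℚ) ≤ Nat.card G / Nat.card (fixingSubgroup G (orbit G a)) := by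
  rw [le_div_iff₀ (mod_cast Nat.card_pos)]
  exact mod_cast ncard_orbit_mul_card_fixingSubgroup_orbit_le a

end GroupAction

section PermGroup

variable {α : Type*} {G : Subgroup (Equiv.Perm α)}

theorem mem_restrictions_iff {B : Set α} {f : B → α} :
    f ∈ restrictions G B ↔ ∃ θ ∈ G, f = fun x => θ x.1 := by
  constructor
  · rintro ⟨θ, rfl⟩
    exact ⟨θ, θ.2, rfl⟩
  · rintro ⟨θ, hθ, rfl⟩
    exact ⟨⟨θ, hθ⟩, rfl⟩

theorem selfRestrictions_eq_setOf (B : Set α) :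
    selfRestrictions G B = {f | ∃ σ ∈ G, σ '' B = B ∧ f = fun x => σ x.1} := by
  ext f
  constructor
  · rintro ⟨⟨σ, hσB⟩, rfl⟩
    exact ⟨σ, σ.2, hσB, rfl⟩
  · rintro ⟨σ, hσ, hσB, rfl⟩
    exact ⟨⟨⟨σ, hσ⟩, hσB⟩, rfl⟩

theorem card_fixingSubgroup_eq_card_setOf (𝓑 : Set (Set α)) :
    Nat.card (fixingSubgroup G 𝓑) =
      Nat.card {σ : Equiv.Perm α | σ ∈ G ∧ ∀ B ∈ 𝓑, σ '' B = B} :=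
  Nat.card_congr
    { toFun := fun σ => ⟨σ.1, σ.1.2, fun B hB => (mem_fixingSubgroup_iff G).1 σ.2 B hB⟩
      invFun := fun σ => ⟨⟨σ.1, σ.2.1⟩, (mem_fixingSubgroup_iff G).2 σ.2.2⟩ }

end PermGroup

section BlockPartition

variable {n : ℕ} {G : Subgroup (Equiv.Perm (Fin n))}

theorem isBlockOf_iff_isBlock {B : Set (Fin n)} : IsBlockOf n G B ↔ IsBlock G B := by
  rw [isBlock_iff_smul_eq_of_nonempty]
  exact ⟨fun h g => h g g.2, fun h σ hσ => h (g := ⟨σ, hσ⟩)⟩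

theorem BlockPartition.blocks_eq_orbit [IsPretransitive G (Fin n)] (P : BlockPartition n G)
    (i : Fin P.ℓ) : P.blocks = orbit G (P.cut i) := by
  ext C
  constructor
  · rintro ⟨j, σ, hσ, rfl⟩
    obtain ⟨x, hx⟩ := P.nonempty_cut i
    obtain ⟨y, hy⟩ := P.nonempty_cut j
    obtain ⟨τ, hτ⟩ := exists_smul_eq G x (σ y)
    have images_eq : τ.1 '' P.cut i = σ '' P.cut j :=
      (P.partitions (σ y)).unique ⟨⟨i, τ, τ.2, rfl⟩, x, hx, hτ⟩ ⟨⟨j, σ, hσ, rfl⟩, y, hy, rfl⟩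
    exact ⟨τ, images_eq⟩
  · rintro ⟨σ, rfl⟩
    exact ⟨i, σ, σ.2, rfl⟩

namespace UPt

/-- `U_{G⋌𝓑}` as a sum of the fence, `G`, the cells grouped by the block that is the domain of
their restriction, and the points. -/
def equivSum (n : ℕ) (G : Subgroup (Equiv.Perm (Fin n))) (𝓑 : Set (Set (Fin n))) :
    UPt n G 𝓑 ≃
      (Fin n ⊕ Fin n) ⊕ G ⊕ (Σ B : 𝓑, restrictions G B.1 × B.1) ⊕ Fin n where
  toFun
    | .low j => .inl (.inl j)
    | .up j => .inl (.inr j)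
    | .grp θ => .inr (.inl θ)
    | .cell μ j => .inr (.inr (.inl ⟨⟨μ.1.1, μ.2.1⟩, ⟨μ.1.2, mem_restrictions_iff.2 μ.2.2⟩, j⟩))
    | .pt j => .inr (.inr (.inr j))
  invFun
    | .inl (.inl j) => .low j
    | .inl (.inr j) => .up j
    | .inr (.inl θ) => .grp θ
    | .inr (.inr (.inl ⟨B, f, j⟩)) =>
      .cell ⟨⟨B.1, f.1⟩, B.2, mem_restrictions_iff.1 f.2⟩ j
    | .inr (.inr (.inr j)) => .pt j
  left_inv x := by cases x <;> rfl
  right_inv := by rintro ((_ | _) | _ | _ | _) <;> rfl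

theorem card_eq (𝓑 : Set (Set (Fin n))) [Fintype 𝓑] :
    Nat.card (UPt n G 𝓑) =
      3 * n + Nat.card G + ∑ B : 𝓑, (restrictions G B.1).ncard * B.1.ncard := by
  rw [Nat.card_congr (equivSum n G 𝓑)]
  simp only [Nat.card_sum, Nat.card_sigma, Nat.card_prod, Nat.card_coe_set_eq, Nat.card_fin]
  ring

theorem card_orbit_eq [IsPretransitive G (Fin n)] {B : Set (Fin n)} (hB : IsBlock G B)
    (hne : B.Nonempty) :
    Nat.card (UPt n G (orbit G B)) =
      3 * n + Nat.card G + n * ((orbit G B).ncard * (selfRestrictions G B).ncard) := by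
  have := Fintype.ofFinite (orbit G B)
  have cells_over : ∀ C : orbit G B, (restrictions G C.1).ncard * C.1.ncard =
      (orbit G B).ncard * (selfRestrictions G B).ncard * B.ncard := by
    rintro ⟨_, g, rfl⟩
    rw [ncard_restrictions_smul, ncard_restrictions, Set.ncard_smul_set]
  have card_points : B.ncard * (orbit G B).ncard = n := by
    rw [hB.ncard_block_mul_ncard_orbit_eq hne, Nat.card_fin]
  rw [card_eq, Finset.sum_congr rfl fun C _ => cells_over C, Finset.sum_const, Finset.card_univ,
    ← Nat.card_eq_fintype_card, Nat.card_coe_set_eq, smul_eq_mul]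
  linear_combination ((orbit G B).ncard * (selfRestrictions G B).ncard) * card_points

theorem card_orbit_le [IsPretransitive G (Fin n)] {B : Set (Fin n)} (hB : IsBlock G B)
    (hne : B.Nonempty) :
    Nat.card (UPt n G (orbit G B)) ≤
      Nat.card G + (orbit G B).ncard * ((selfRestrictions G B).ncard * (n + 3)) := by
  have points_le := card_le_ncard_orbit_mul_ncard_selfRestrictions hB hne
  rw [Nat.card_fin] at points_le
  rw [card_orbit_eq hB hne]
  linarith

end UPt

end BlockPartition

/-- If `G` is transitive on `T = {1,…,n}` and the block partition has
orbit cut `{B_1}` (i.e. `ℓ = 1`), then, with `N = {σ ∈ G : σ[B] = B for all B ∈ 𝓑}`,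
`|U_{G⋌𝓑}| ≤ |G| · (1 + (|G↺B_1|/|N|)·(n + 3))`. -/
theorem size_transitive_bound (n : ℕ) (hn : 1 ≤ n) (G : Subgroup (Equiv.Perm (Fin n)))
    (P : BlockPartition n G) (hl : P.ℓ = 1)
    (htrans : ∀ a b : Fin n, ∃ σ ∈ G, (σ : Equiv.Perm (Fin n)) a = b) :
    ∀ i : Fin P.ℓ,
      (Nat.card (UPt n G P.blocks) : ℚ) ≤
        (Nat.card G : ℚ) *
          (1 +
            ((Nat.card {f : (P.cut i) → Fin n | ∃ σ ∈ G,
                (σ : Equiv.Perm (Fin n)) '' P.cut i = P.cut i ∧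
                f = fun x => (σ : Equiv.Perm (Fin n)) x.1} : ℚ) /
              (Nat.card {σ : Equiv.Perm (Fin n) | σ ∈ G ∧ ∀ B ∈ P.blocks, σ '' B = B} : ℚ)) *
            ((n : ℚ) + 3)) := by
  intro i
  have : IsPretransitive G (Fin n) := ⟨fun a b =>
    let ⟨σ, hσ, hab⟩ := htrans a b
    ⟨⟨σ, hσ⟩, hab⟩⟩
  have block : IsBlock G (P.cut i) := isBlockOf_iff_isBlock.1 (P.isBlock_cut i)
  have blocks_le := ncard_orbit_le_card_div_card_fixingSubgroup_orbit (G := G) (P.cut i)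
  rw [← selfRestrictions_eq_setOf, ← card_fixingSubgroup_eq_card_setOf, P.blocks_eq_orbit i,
    Nat.card_coe_set_eq]
  calc (Nat.card (UPt n G (orbit G (P.cut i))) : ℚ)
      ≤ Nat.card G + (orbit G (P.cut i)).ncard *
          ((selfRestrictions G (P.cut i)).ncard * (n + 3)) :=
        mod_cast UPt.card_orbit_le block (P.nonempty_cut i)
    _ ≤ Nat.card G + Nat.card G / Nat.card (fixingSubgroup G (orbit G (P.cut i))) *
          ((selfRestrictions G (P.cut i)).ncard * (n + 3)) := by gcongr
    _ = _ := by ring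
end

section
/- Let G be a subgroup of S_n with block partition 𝓑. Every order-automorphism of U_{G⋌𝓑} maps each of the following five sets onto itself: T, {ℓ_1,…,ℓ_n}, {u_1,…,u_n}, G, and ⋃_{μ ∈ ⋃_{B∈𝓑} G|_B} D^μ. -/
/-- Every point of `T` is a value of some restriction `θ|_B` with `θ ∈ G` and `B ∈ 𝓑`, that is,
the images `θ[B]` cover `T`; this is what puts every point of `T` at height 3 in `U_{G⋌𝓑}`. -/
def RestrCovers {n : ℕ} (G : Subgroup (Equiv.Perm (Fin n))) (𝓑 : Set (Set (Fin n))) : Prop :=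
  ∀ j, ∃ (μ : Restr n G 𝓑) (x : μ.1.1), μ.1.2 x = j

theorem BlockPartition.restrCovers {n : ℕ} {G : Subgroup (Equiv.Perm (Fin n))}
    (P : BlockPartition n G) : RestrCovers G P.blocks := by
  intro j
  obtain ⟨B, ⟨hB, hj⟩, -⟩ := P.partitions j
  exact ⟨⟨⟨B, Subtype.val⟩, hB, 1, one_mem G, rfl⟩, ⟨j, hj⟩, rfl⟩

theorem UStep.lt {n : ℕ} {G : Subgroup (Equiv.Perm (Fin n))} {𝓑 : Set (Set (Fin n))}
    {x y : UPt n G 𝓑} (h : UStep n G 𝓑 x y) : x < y :=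
  lt_of_le_of_ne (Relation.ReflTransGen.single h) (ne_of_apply_ne UPt.rank h.rank_lt.ne)

namespace UPt

variable {n m : ℕ} {G : Subgroup (Equiv.Perm (Fin n))} {H : Subgroup (Equiv.Perm (Fin m))}
  {𝓑 : Set (Set (Fin n))} {𝓒 : Set (Set (Fin m))}

theorem exists_step_of_lt {x y : UPt n G 𝓑} (h : x < y) : ∃ z, UStep n G 𝓑 x z ∧ z ≤ y :=
  (Relation.ReflTransGen.cases_head h.le).resolve_left h.ne

theorem rank_monotone : Monotone (rank : UPt n G 𝓑 → ℕ) := by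
  intro x y h
  induction h with
  | refl => exact le_rfl
  | tail _ hstep ih => exact ih.trans hstep.rank_lt.le

theorem rank_strictMono : StrictMono (rank : UPt n G 𝓑 → ℕ) := by
  intro x y h
  obtain ⟨z, hxz, hzy⟩ := exists_step_of_lt h
  exact hxz.rank_lt.trans_le (rank_monotone hzy)

theorem exists_lt_rank_add_one_eq (h𝓑 : RestrCovers G 𝓑) {x : UPt n G 𝓑} (hx : x.rank ≠ 0) :
    ∃ y < x, y.rank + 1 = x.rank := by
  cases x with
  | low _ | grp _ => exact absurd rfl hx
  | up i => exact ⟨.low i, (UStep.fence_eq i).lt, rfl⟩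
  | cell μ j => exact ⟨.up j, (UStep.up_cell μ j).lt, rfl⟩
  | pt j =>
    obtain ⟨μ, i, rfl⟩ := h𝓑 j
    exact ⟨.cell μ i, (UStep.cell_pt μ i).lt, rfl⟩

theorem exists_lt_rank_eq (h𝓑 : RestrCovers G 𝓑) (x : UPt n G 𝓑) (k : ℕ) (hk : k < x.rank) :
    ∃ y < x, y.rank = k := by
  obtain ⟨y, hyx, hy⟩ := exists_lt_rank_add_one_eq h𝓑 (Nat.ne_zero_of_lt hk)
  obtain rfl | hky : k = y.rank ∨ k < y.rank := by lia
  · exact ⟨y, hyx, rfl⟩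
  · obtain ⟨z, hzy, hz⟩ := exists_lt_rank_eq h𝓑 y k hky
    exact ⟨z, hzy.trans hyx, hz⟩
termination_by x.rank

theorem height_eq_rank (h𝓑 : RestrCovers G 𝓑) (x : UPt n G 𝓑) : Order.height x = x.rank := by
  rw [Order.height_eq_of_strictMono rank rank_strictMono (exists_lt_rank_eq h𝓑), Order.height_nat]

theorem rank_orderIso (h𝓑 : RestrCovers G 𝓑) (h𝓒 : RestrCovers H 𝓒)
    (Ψ : UPt n G 𝓑 ≃o UPt m H 𝓒) (x : UPt n G 𝓑) : (Ψ x).rank = x.rank := by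
  have height_eq : Order.height (Ψ x) = Order.height x := Order.height_orderIso Ψ x
  rwa [height_eq_rank h𝓑, height_eq_rank h𝓒, Nat.cast_inj] at height_eq

theorem exists_gt_rank_orderIso (h𝓑 : RestrCovers G 𝓑) (h𝓒 : RestrCovers H 𝓒)
    (Ψ : UPt n G 𝓑 ≃o UPt m H 𝓒) (x : UPt n G 𝓑) (k : ℕ) :
    (∃ y > Ψ x, y.rank = k) ↔ ∃ y > x, y.rank = k := by
  simp only [Ψ.surjective.exists, gt_iff_lt, Ψ.lt_iff_lt, rank_orderIso h𝓑 h𝓒]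

theorem exists_eq_pt_iff (x : UPt n G 𝓑) : (∃ j, x = .pt j) ↔ x.rank = 3 := by
  cases x <;> simp [rank]

theorem exists_eq_up_iff (x : UPt n G 𝓑) : (∃ i, x = .up i) ↔ x.rank = 1 := by
  cases x <;> simp [rank]

theorem exists_eq_cell_iff (x : UPt n G 𝓑) :
    (∃ (μ : Restr n G 𝓑) (j : μ.1.1), x = .cell μ j) ↔ x.rank = 2 := by
  cases x with
  | cell μ j => exact ⟨fun _ => rfl, fun _ => ⟨μ, j, rfl⟩⟩
  | _ => simp [rank]

theorem exists_eq_low_of_lt_of_rank_eq_one {x y : UPt n G 𝓑} (hxy : x < y) (hy : y.rank = 1) :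
    ∃ i, x = .low i := by
  obtain ⟨z, hxz, hzy⟩ := exists_step_of_lt hxy
  have hz : z.rank ≤ 1 := hy ▸ rank_monotone hzy
  cases hxz with
  | fence_eq i | fence_succ _ i => exact ⟨i, rfl⟩
  | up_cell | cell_pt | grp_cell => simp [rank] at hz

theorem exists_eq_low_iff (x : UPt n G 𝓑) : (∃ i, x = .low i) ↔ ∃ y > x, y.rank = 1 := by
  constructor
  · rintro ⟨i, rfl⟩
    exact ⟨.up i, (UStep.fence_eq i).lt, rfl⟩
  · rintro ⟨y, hxy, hy⟩
    exact exists_eq_low_of_lt_of_rank_eq_one hxy hy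

theorem exists_eq_grp_iff (x : UPt n G 𝓑) :
    (∃ θ, x = .grp θ) ↔ x.rank = 0 ∧ ¬ ∃ y > x, y.rank = 1 := by
  rw [← exists_eq_low_iff]
  cases x <;> simp [rank]

end UPt

theorem automorphism_preserves_levels_general {n m : ℕ} {G : Subgroup (Equiv.Perm (Fin n))}
    {H : Subgroup (Equiv.Perm (Fin m))} {𝓑 : Set (Set (Fin n))} {𝓒 : Set (Set (Fin m))}
    (h𝓑 : RestrCovers G 𝓑) (h𝓒 : RestrCovers H 𝓒) (Ψ : UPt n G 𝓑 ≃o UPt m H 𝓒) :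
    Ψ '' {x | ∃ j, x = .pt j} = {x | ∃ j, x = .pt j} ∧
    Ψ '' {x | ∃ i, x = .low i} = {x | ∃ i, x = .low i} ∧
    Ψ '' {x | ∃ i, x = .up i} = {x | ∃ i, x = .up i} ∧
    Ψ '' {x | ∃ θ, x = .grp θ} = {x | ∃ θ, x = .grp θ} ∧
    Ψ '' {x | ∃ (μ : Restr n G 𝓑) (j : μ.1.1), x = .cell μ j} =
      {x | ∃ (μ : Restr m H 𝓒) (j : μ.1.1), x = .cell μ j} := by
  have image_eq {p : UPt n G 𝓑 → Prop} {q : UPt m H 𝓒 → Prop} (hpq : ∀ x, p x ↔ q (Ψ x)) :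
      Ψ '' {x | p x} = {x | q x} :=
    (Ψ.toEquiv.eq_preimage_iff_image_eq _ _).1 (Set.ext hpq)
  refine ⟨image_eq fun x => ?_, image_eq fun x => ?_, image_eq fun x => ?_,
    image_eq fun x => ?_, image_eq fun x => ?_⟩
  · rw [UPt.exists_eq_pt_iff, UPt.exists_eq_pt_iff, UPt.rank_orderIso h𝓑 h𝓒]
  · rw [UPt.exists_eq_low_iff, UPt.exists_eq_low_iff, UPt.exists_gt_rank_orderIso h𝓑 h𝓒]
  · rw [UPt.exists_eq_up_iff, UPt.exists_eq_up_iff, UPt.rank_orderIso h𝓑 h𝓒]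
  · rw [UPt.exists_eq_grp_iff, UPt.exists_eq_grp_iff, UPt.rank_orderIso h𝓑 h𝓒,
      UPt.exists_gt_rank_orderIso h𝓑 h𝓒]
  · rw [UPt.exists_eq_cell_iff, UPt.exists_eq_cell_iff, UPt.rank_orderIso h𝓑 h𝓒]

/-- Every order-automorphism of `U_{G⋌𝓑}` maps each of the five sets
`T`, `{ℓ_1,…,ℓ_n}`, `{u_1,…,u_n}`, `G`, and `⋃_μ D^μ` onto itself. -/
theorem automorphism_preserves_levels (n : ℕ) (hn : 1 ≤ n) (G : Subgroup (Equiv.Perm (Fin n)))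
    (P : BlockPartition n G) (Ψ : UPt n G P.blocks ≃o UPt n G P.blocks) :
    (⇑Ψ) '' {x : UPt n G P.blocks | ∃ j : Fin n, x = UPt.pt j} =
      {x : UPt n G P.blocks | ∃ j : Fin n, x = UPt.pt j} ∧
    (⇑Ψ) '' {x : UPt n G P.blocks | ∃ i : Fin n, x = UPt.low i} =
      {x : UPt n G P.blocks | ∃ i : Fin n, x = UPt.low i} ∧
    (⇑Ψ) '' {x : UPt n G P.blocks | ∃ i : Fin n, x = UPt.up i} =
      {x : UPt n G P.blocks | ∃ i : Fin n, x = UPt.up i} ∧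
    (⇑Ψ) '' {x : UPt n G P.blocks | ∃ θ : G, x = UPt.grp θ} =
      {x : UPt n G P.blocks | ∃ θ : G, x = UPt.grp θ} ∧
    (⇑Ψ) '' {x : UPt n G P.blocks | ∃ (μ : Restr n G P.blocks) (j : μ.1.1), x = UPt.cell μ j} =
      {x : UPt n G P.blocks | ∃ (μ : Restr n G P.blocks) (j : μ.1.1), x = UPt.cell μ j} :=
  automorphism_preserves_levels_general P.restrCovers P.restrCovers Ψ
end
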